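/- Under assumption (A_k), there exists ε > 0 sufficiently small such that x_±(t) := η_±(t) + t·g(η_±(t)) belong to C^{2k+1}((1,1+ε)) ∩ C^{(2k+1)/(2k)}([1,1+ε)); they are the envelopes of the family of characteristic lines, i.e. (d/dt)x_±(t) = g(η_±(t)) for 1 ≤ t < 1+ε (so the tangent direction of x = x_±(t) coincides with the characteristic speed at (t,x_±(t))), they form a cusp at (1,0), and x_±(t) = ∓2k(2k+1)^{−(2k+1)/(2k)}(t−1)^{(2k+1)/(2k)} + (g^{(2k+2)}(0)/(2k+2)!)·(2k+1)^{−(k+1)/k}·(t−1)^{(k+1)/k} + o((t−1)^{(k+1)/k}) as t → 1+. -/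

import Mathlib

open Real Filter Topology Set Asymptotics

/-- Finite-degeneracy assumption (A_k). -/
def AssumptionA (k : ℕ) (g : ℝ → ℝ) : Prop :=
  1 ≤ k ∧
  ContDiff ℝ (2 * k + 2 : ℕ) g ∧
  (∃ M, ∀ x, |g x| ≤ M) ∧
  deriv g 0 = -1 ∧
  (∀ x, -1 ≤ deriv g x) ∧
  ∃ r : ℝ → ℝ, ContDiff ℝ (2 * k + 2 : ℕ) r ∧
    (∀ᶠ x in 𝓝 (0 : ℝ), g x = -x + x ^ (2 * k + 1) + r x) ∧
    ∀ j : ℕ, j ≤ 2 * k + 2 →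
      (fun x => iteratedDeriv j r x) =O[𝓝 (0 : ℝ)] fun x => x ^ (2 * k + 2 - j)

theorem hasDerivAt_div_pow_zero {f : ℝ → ℝ} {m : ℕ} (hf : ContDiff ℝ (m + 1 : ℕ) f)
    (hm : m ≠ 0) (h0 : ∀ j ≤ m, iteratedDeriv j f 0 = 0) :
    HasDerivAt (fun y => f y / y ^ m)
      (iteratedDeriv (m + 1) f 0 / (Nat.factorial (m + 1) : ℝ)) 0 := by
  have ht := taylor_isLittleO_univ (x₀ := 0) hf
  have hs : ∀ x, taylorWithinEval f (m + 1) univ 0 x =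
      iteratedDeriv (m + 1) f 0 / (Nat.factorial (m + 1) : ℝ) * x ^ (m + 1) := by
    intro x
    rw [taylor_within_apply, Finset.sum_range_succ, Finset.sum_eq_zero]
    · simp only [iteratedDerivWithin_univ, smul_eq_mul, sub_zero]
      ring
    · intro j hj
      rw [iteratedDerivWithin_univ, h0 j (by simpa [Nat.lt_succ_iff] using hj), smul_zero]
  rw [hasDerivAt_iff_isLittleO]
  simp only [hs, sub_zero] at ht
  have hd := ht.mul_isBigO (isBigO_refl (fun x : ℝ => (x ^ m)⁻¹) (𝓝 0))
  refine hd.congr ?_ ?_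
  · intro x
    rcases eq_or_ne x 0 with rfl | hx
    · simp [hm]
    · simp [hm]
      field_simp
      ring
  · intro x
    rcases eq_or_ne x 0 with rfl | hx
    · simp
    · simp
      field_simp
      ring

theorem eventually_deriv_eq {n : ℕ} {g r : ℝ → ℝ}
    (hgr : ∀ᶠ x in 𝓝 (0 : ℝ), g x = -x + x ^ (n + 1) + r x) (hr : Differentiable ℝ r) :
    ∀ᶠ y in 𝓝 (0 : ℝ), deriv g y = -1 + ((n + 1 : ℕ) : ℝ) * y ^ n + deriv r y := by
  filter_upwards [hgr.eventually_nhds] with y hy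
  have h : HasDerivAt (fun x => -x + x ^ (n + 1) + r x)
      (-1 + ((n + 1 : ℕ) : ℝ) * y ^ n + deriv r y) y :=
    ((hasDerivAt_id y).neg.add (hasDerivAt_pow _ _)).add (hr y).hasDerivAt
  exact (h.congr_of_eventuallyEq hy).deriv

theorem AssumptionA.expansion {k : ℕ} {g : ℝ → ℝ} (hA : AssumptionA k g) :
    ∃ V u : ℝ → ℝ, V 0 = 1 ∧ u 0 = 1 ∧
      HasDerivAt V (iteratedDeriv (2 * k + 2) g 0 / (Nat.factorial (2 * k + 2) : ℝ)) 0 ∧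
      HasDerivAt u ((2 * k + 2) / (2 * k + 1) *
        (iteratedDeriv (2 * k + 2) g 0 / (Nat.factorial (2 * k + 2) : ℝ))) 0 ∧
      (∀ᶠ y in 𝓝 (0 : ℝ), g y = -y + y ^ (2 * k + 1) * V y) ∧
      ∀ᶠ y in 𝓝 (0 : ℝ), deriv g y = -1 + (2 * k + 1) * y ^ (2 * k) * u y := by
  obtain ⟨hk, -, -, -, -, r, hr, hgr, hO⟩ := hA
  have hz : ∀ j < 2 * k + 2, iteratedDeriv j r 0 = 0 := by
    intro j hj
    have h := (hO j hj.le).eq_zero_imp.self_of_nhds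
    exact h (by simp; omega)
  have ha : iteratedDeriv (2 * k + 2) g 0 = iteratedDeriv (2 * k + 2) r 0 := by
    have h1 : g =ᶠ[𝓝 0] (fun x => -x ^ 1 + x ^ (2 * k + 1)) + r := by
      filter_upwards [hgr] with x hx
      simpa using hx
    rw [h1.iteratedDeriv_eq, iteratedDeriv_add (by fun_prop) hr.contDiffAt,
      iteratedDeriv_fun_add (by fun_prop) (by fun_prop), iteratedDeriv_fun_neg,
      iteratedDeriv_fun_pow_zero, iteratedDeriv_fun_pow_zero]
    simp
  have hr0 : r 0 = 0 := by simpa using hz 0 (by omega)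
  have hd0 : deriv r 0 = 0 := by simpa using hz 1 (by omega)
  have hV := hasDerivAt_div_pow_zero (m := 2 * k + 1) hr (by omega) (fun j hj => hz j (by omega))
  have hdr : ContDiff ℝ (2 * k + 1 : ℕ) (deriv r) := by
    have : ContDiff ℝ ((2 * k + 1 : ℕ) + 1) r := by exact_mod_cast hr
    exact (contDiff_succ_iff_deriv.1 this).2.2
  have hu := hasDerivAt_div_pow_zero (m := 2 * k) hdr (by omega) (fun j hj => by
    rw [← iteratedDeriv_succ']; exact hz _ (by omega))
  rw [← iteratedDeriv_succ'] at hu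
  refine ⟨fun y => 1 + r y / y ^ (2 * k + 1),
    fun y => 1 + (2 * k + 1 : ℝ)⁻¹ * (deriv r y / y ^ (2 * k)),
    by simp, by simp [show k ≠ 0 by omega], ?_, ?_, ?_, ?_⟩
  · rw [ha]
    exact hV.const_add 1
  · rw [ha]
    refine ((hu.const_mul (2 * k + 1 : ℝ)⁻¹).const_add 1).congr_deriv ?_
    have h : (Nat.factorial (2 * k + 2) : ℝ) = (2 * k + 2) * (Nat.factorial (2 * k + 1)) := by
      rw [Nat.factorial_succ (2 * k + 1)]; push_cast; ring
    rw [h]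
    field_simp
  · filter_upwards [hgr] with y hy
    rcases eq_or_ne y 0 with rfl | hx
    · simp [hy, hr0]
    · rw [hy]
      field_simp
      ring
  · filter_upwards [eventually_deriv_eq hgr (hr.differentiable (by simp))] with y hy
    rw [hy]
    rcases eq_or_ne y 0 with rfl | hx
    · simp [hd0]
    · push_cast
      field_simp
      ring

theorem deriv_neg_comp_neg (g : ℝ → ℝ) (x : ℝ) :
    deriv (fun x => -g (-x)) x = deriv g (-x) := by
  simp [deriv_comp_neg]

theorem AssumptionA.neg {k : ℕ} {g : ℝ → ℝ} (hA : AssumptionA k g) :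
    AssumptionA k (fun x => -g (-x)) := by
  obtain ⟨hk, hg, ⟨M, hM⟩, hg0, hmin, r, hr, hgr, hO⟩ := hA
  have hn : Tendsto (fun x : ℝ => -x) (𝓝 0) (𝓝 0) := by
    simpa using (continuous_neg (G := ℝ)).tendsto 0
  refine ⟨hk, (hg.comp contDiff_neg).neg, ⟨M, fun x => by simpa using hM (-x)⟩,
    by simp [deriv_neg_comp_neg, hg0],
    fun x => by rw [deriv_neg_comp_neg]; exact hmin _, fun x => -r (-x), (hr.comp contDiff_neg).neg, ?_, ?_⟩
  · filter_upwards [hn.eventually hgr] with x hx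
    rw [hx, Odd.neg_pow ⟨k, rfl⟩]
    ring
  · intro j hj
    have h := (hO j hj).comp_tendsto hn
    refine IsBigO.trans (IsBigO.of_bound 1 ?_) (h.trans (IsBigO.of_bound 1 ?_))
    · refine Eventually.of_forall fun x => ?_
      simp [iteratedDeriv_fun_neg, iteratedDeriv_comp_neg]
    · refine Eventually.of_forall fun x => ?_
      simp

theorem AssumptionA.contDiff_deriv {k : ℕ} {g : ℝ → ℝ} (hA : AssumptionA k g) :
    ContDiff ℝ (2 * k + 1 : ℕ) (deriv g) := by
  have : ContDiff ℝ ((2 * k + 1 : ℕ) + 1) g := by exact_mod_cast hA.2.1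
  exact (contDiff_succ_iff_deriv.1 this).2.2

theorem AssumptionA.le_deriv_deriv {k : ℕ} {g : ℝ → ℝ} (hA : AssumptionA k g) :
    ∀ᶠ y in 𝓝[>] (0 : ℝ), 2 * k * y ^ (2 * k - 1) ≤ deriv (deriv g) y := by
  obtain ⟨hk, hg, -, -, -, r, hr, hgr, hO⟩ := hA
  have h2 := hO 2 (by omega)
  have hlo : (fun x => iteratedDeriv 2 r x) =o[𝓝 0] fun x : ℝ => x ^ (2 * k - 1) :=
    h2.trans_isLittleO (isLittleO_pow_pow (by omega))
  have hb := hlo.bound (show (0 : ℝ) < 1 by norm_num)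
  filter_upwards [nhdsWithin_le_nhds hb, nhdsWithin_le_nhds
    (eventually_deriv_eq hgr (hr.differentiable (by simp))).eventually_nhds,
    self_mem_nhdsWithin] with y hy he hpos
  have hpos : 0 < y := hpos
  have hdr : Differentiable ℝ (deriv r) := by
    have : ContDiff ℝ ((2 * k + 1 : ℕ) + 1) r := by exact_mod_cast hr
    exact (contDiff_succ_iff_deriv.1 this).2.2.differentiable (by simp)
  have h2 : HasDerivAt (fun x => -1 + ((2 * k + 1 : ℕ) : ℝ) * x ^ (2 * k) + deriv r x)
      (((2 * k + 1 : ℕ) : ℝ) * (((2 * k : ℕ) : ℝ) * y ^ (2 * k - 1)) + deriv (deriv r) y) y :=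
    (((hasDerivAt_pow _ _).const_mul _).const_add _).add (hdr y).hasDerivAt
  rw [(h2.congr_of_eventuallyEq he).deriv]
  have hp : 0 < y ^ (2 * k - 1) := pow_pos hpos _
  rw [iteratedDeriv_succ, iteratedDeriv_one, Real.norm_eq_abs, Real.norm_eq_abs, abs_of_pos hp,
    one_mul] at hy
  have := (abs_le.1 hy).1
  have hk' : (1 : ℝ) ≤ k := by exact_mod_cast hk
  push_cast
  have : y ^ (2 * k - 1) ≤ 2 * k * (2 * k) * y ^ (2 * k - 1) :=
    le_mul_of_one_le_left hp.le (by nlinarith)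
  linarith

theorem AssumptionA.exists_pow_sub_le {k : ℕ} {g : ℝ → ℝ} (hA : AssumptionA k g) :
    ∃ δ > 0, (∀ y ∈ Ioo 0 δ, 0 < deriv (deriv g) y) ∧
      ∀ y₁ y₂, 0 ≤ y₁ → y₁ ≤ y₂ → y₂ < δ → (y₂ - y₁) ^ (2 * k) ≤ deriv g y₂ - deriv g y₁ := by
  obtain ⟨δ, hδ, h⟩ := mem_nhdsGT_iff_exists_Ioo_subset.1 hA.le_deriv_deriv
  have hk := hA.1
  have hk' : (1 : ℝ) ≤ k := by exact_mod_cast hk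
  refine ⟨δ, hδ, fun y hy => lt_of_lt_of_le ?_ (h hy), fun y₁ y₂ h1 h12 h2 => ?_⟩
  · have := pow_pos hy.1 (2 * k - 1)
    positivity
  · have hdg : Differentiable ℝ (deriv g) := hA.contDiff_deriv.differentiable (by simp)
    have hd : ∀ y, HasDerivAt (fun y => deriv g y - y ^ (2 * k))
        (deriv (deriv g) y - ((2 * k : ℕ) : ℝ) * y ^ (2 * k - 1)) y := fun y =>
      (hdg y).hasDerivAt.sub (hasDerivAt_pow _ _)
    have hm : MonotoneOn (fun y => deriv g y - y ^ (2 * k)) (Ico 0 δ) := by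
      refine monotoneOn_of_deriv_nonneg (convex_Ico _ _)
        (fun y _ => (hd y).continuousAt.continuousWithinAt)
        (fun y _ => (hd y).differentiableAt.differentiableWithinAt) fun y hy => ?_
      rw [interior_Ico] at hy
      rw [(hd y).deriv]
      push_cast
      exact sub_nonneg.2 (h hy)
    have h3 := hm ⟨h1, h12.trans_lt h2⟩ ⟨h1.trans h12, h2⟩ h12
    have h4 := pow_add_pow_le (sub_nonneg.2 h12) h1 (n := 2 * k) (by omega)
    rw [sub_add_cancel] at h4
    simp only at h3
    linarith

theorem AssumptionA.apply_zero {k : ℕ} {g : ℝ → ℝ} (hA : AssumptionA k g) : g 0 = 0 := by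
  obtain ⟨V, u, -, -, -, -, hg, -⟩ := hA.expansion
  simpa using hg.self_of_nhds

/-- The envelope expansion, parametrized by the foot `y` of the characteristic: the line through
`(0, y)` touches the envelope at time `-(g' y)⁻¹`. -/
theorem AssumptionA.isLittleO_envelope {k : ℕ} {g : ℝ → ℝ} (hA : AssumptionA k g) :
    (fun y => (y + -(deriv g y)⁻¹ * g y)
        + 2 * (k : ℝ) * (2 * (k : ℝ) + 1) ^ (-(2 * (k : ℝ) + 1) / (2 * (k : ℝ)))
          * (-(deriv g y)⁻¹ - 1) ^ ((2 * (k : ℝ) + 1) / (2 * (k : ℝ)))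
        - iteratedDeriv (2 * k + 2) g 0 / (Nat.factorial (2 * k + 2) : ℝ)
          * (2 * (k : ℝ) + 1) ^ (-((k : ℝ) + 1) / (k : ℝ))
          * (-(deriv g y)⁻¹ - 1) ^ (((k : ℝ) + 1) / (k : ℝ)))
      =o[𝓝[>] (0 : ℝ)] fun y => (-(deriv g y)⁻¹ - 1) ^ (((k : ℝ) + 1) / (k : ℝ)) := by
  obtain ⟨V, u, hV0, hu0, hV, hu, hg, hdg⟩ := hA.expansion
  have hk := hA.1
  have hd0 := hA.2.2.2.1
  have hk0 : (k : ℝ) ≠ 0 := by exact_mod_cast (show k ≠ 0 by omega)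
  generalize iteratedDeriv (2 * k + 2) g 0 / (Nat.factorial (2 * k + 2) : ℝ) = a at *
  set p : ℝ := (2 * (k : ℝ) + 1) / (2 * (k : ℝ)) with hp
  set q : ℝ := ((k : ℝ) + 1) / (k : ℝ) with hq
  rw [neg_div, neg_div, ← hp, ← hq]
  have hn : (0 : ℝ) < 2 * k + 1 := by positivity
  set T : ℝ → ℝ := fun y => -(deriv g y)⁻¹ with hT
  have hddg : HasDerivAt (deriv g) 0 0 := by
    have h : HasDerivAt (fun y : ℝ => -1 + (2 * k + 1) * y ^ (2 * k) * u y) 0 0 := by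
      refine ((((hasDerivAt_pow (2 * k) (0 : ℝ)).const_mul (2 * k + 1 : ℝ)).mul hu).const_add
        (-1)).congr_deriv ?_
      simp [show k ≠ 0 by omega, show 2 * k - 1 ≠ 0 by omega]
    exact h.congr_of_eventuallyEq hdg
  have hT0 : T 0 = 1 := by simp [hT, hd0]
  have hTd : HasDerivAt T 0 0 := by
    refine (hddg.inv (by simp [hd0])).neg.congr_deriv (by simp)
  have hw := hu.mul hTd
  set w : ℝ → ℝ := u * T with hwdef
  have hw0 : w 0 = 1 := by simp [hwdef, hT0, hu0]
  have hwp := hw.rpow_const (p := p) (Or.inl (by simp [hw0]))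
  have hwq := hw.rpow_const (p := q) (Or.inl (by simp [hw0]))
  have hD : (fun y => T y * (V y - (2 * k + 1) * u y) + 2 * k * w y ^ p - a * (y * w y ^ q))
      =o[𝓝 0] fun y : ℝ => y := by
    have h := ((hTd.mul (hV.sub (hu.const_mul (2 * k + 1 : ℝ)))).add
      (hwp.const_mul (2 * k : ℝ))).sub (((hasDerivAt_id (0 : ℝ)).mul hwq).const_mul a)
    rw [hasDerivAt_iff_isLittleO] at h
    refine h.congr (fun y => ?_) (fun y => by simp)
    simp only [Pi.add_apply, Pi.sub_apply, Pi.mul_apply, hT0, hV0, hu0, hw0, id, Real.one_rpow, hp,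
      smul_eq_mul]
    field_simp
    ring
  have hwpos : ∀ᶠ y in 𝓝 (0 : ℝ), 0 < w y :=
    hw.continuousAt.eventually (lt_mem_nhds (by simp [hw0]))
  have hdne : ∀ᶠ y in 𝓝 (0 : ℝ), deriv g y ≠ 0 :=
    hddg.continuousAt.eventually_ne (by simp [hd0])
  have hS : ∀ᶠ y in 𝓝 (0 : ℝ), T y - 1 = (2 * k + 1) * y ^ (2 * k) * w y := by
    filter_upwards [hdg, hdne] with y hy hne
    have : (2 * k + 1) * y ^ (2 * k) * w y = ((2 * k + 1) * y ^ (2 * k) * u y) * T y := by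
      simp only [hwdef, Pi.mul_apply]; ring
    rw [this, show (2 * k + 1) * y ^ (2 * k) * u y = deriv g y + 1 by rw [hy]; ring]
    simp only [hT]
    field_simp
    ring
  have hSr : ∀ (m : ℕ) (e : ℝ), (2 * k : ℕ) * e = m → ∀ᶠ y in 𝓝[>] (0 : ℝ),
      (T y - 1) ^ e = (2 * k + 1 : ℝ) ^ e * y ^ m * w y ^ e := by
    intro m e hme
    filter_upwards [nhdsWithin_le_nhds hS, nhdsWithin_le_nhds hwpos, self_mem_nhdsWithin]
      with y hy hwy hypos
    have hypos : 0 < y := hypos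
    rw [hy, Real.mul_rpow (by positivity) hwy.le, Real.mul_rpow hn.le (by positivity),
      ← Real.rpow_natCast y (2 * k), ← Real.rpow_mul hypos.le, hme, Real.rpow_natCast]
  have hSp := hSr (2 * k + 1) p (by rw [hp]; push_cast; field_simp)
  have hSq := hSr (2 * k + 2) q (by rw [hq]; push_cast; field_simp)
  have hbig : (fun y : ℝ => y ^ (2 * k + 2)) =O[𝓝[>] (0 : ℝ)] fun y => (T y - 1) ^ q := by
    have hc : Tendsto (fun y => ((2 * k + 1 : ℝ) ^ q * w y ^ q)⁻¹) (𝓝[>] 0)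
        (𝓝 ((2 * k + 1 : ℝ) ^ q * w 0 ^ q)⁻¹) := by
      refine Tendsto.inv₀ (tendsto_nhdsWithin_of_tendsto_nhds
        (hwq.continuousAt.tendsto.const_mul _)) ?_
      rw [hw0]
      positivity
    have h := (hc.isBigO_one ℝ).mul (isBigO_refl (fun y => (T y - 1) ^ q) (𝓝[>] (0 : ℝ)))
    refine h.congr' ?_ (by simp)
    filter_upwards [hSq, nhdsWithin_le_nhds hwpos] with y hy hwy
    rw [hy]
    have : 0 < (2 * k + 1 : ℝ) ^ q := by positivity
    have : 0 < w y ^ q := by positivity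
    field_simp
  refine IsLittleO.trans_isBigO ?_ hbig
  have h := (isBigO_refl (fun y : ℝ => y ^ (2 * k + 1)) (𝓝[>] (0 : ℝ))).mul_isLittleO
    (hD.mono nhdsWithin_le_nhds)
  refine h.congr' ?_ (Eventually.of_forall fun y => (pow_succ y (2 * k + 1)).symm)
  filter_upwards [hSp, hSq, nhdsWithin_le_nhds hg, nhdsWithin_le_nhds hdg,
    nhdsWithin_le_nhds hdne] with y hyp hyq hgy hdy hne
  have hX : y + T y * g y = T y * (y * -deriv g y + g y) := by
    simp only [hT]
    field_simp
    ring
  rw [hyp, hyq, hX, hgy, hdy, Real.rpow_neg hn.le, Real.rpow_neg hn.le]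
  have : 0 < (2 * k + 1 : ℝ) ^ q := by positivity
  have : 0 < (2 * k + 1 : ℝ) ^ p := by positivity
  field_simp
  ring

theorem contDiffAt_of_comp_eventuallyEq {F η τ : ℝ → ℝ} {n : WithTop ℕ∞} {t₀ : ℝ} {U : Set ℝ}
    (hn : n ≠ 0) (hF : ContDiffAt ℝ n F (η t₀)) (hF' : deriv F (η t₀) ≠ 0)
    (hτ : ContDiffAt ℝ n τ t₀) (hτ₀ : F (η t₀) = τ t₀) (hU : U ∈ 𝓝 (η t₀))
    (huniq : ∀ᶠ t in 𝓝 t₀, ∀ z ∈ U, F z = τ t → z = η t) : ContDiffAt ℝ n η t₀ := by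
  have hd : HasFDerivAt F (ContinuousLinearEquiv.unitsEquivAut ℝ (Units.mk0 _ hF') : ℝ →L[ℝ] ℝ)
      (η t₀) := by
    refine (hF.differentiableAt hn).hasDerivAt.hasFDerivAt.congr_fderiv ?_
    ext
    simp
  have hφ := hF.to_localInverse hd hn
  set φ := hF.localInverse hd hn with hφdef
  have hright : ∀ᶠ y in 𝓝 (F (η t₀)), F (φ y) = y :=
    (hF.hasStrictFDerivAt' hd hn).eventually_right_inverse
  have hφ₀ : φ (F (η t₀)) = η t₀ := hF.localInverse_apply_image hd hn
  rw [hτ₀] at hφ hright hφ₀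
  have hcomp : ContDiffAt ℝ n (fun t => φ (τ t)) t₀ := hφ.comp t₀ hτ
  refine hcomp.congr_of_eventuallyEq ?_
  have hUt : ∀ᶠ t in 𝓝 t₀, φ (τ t) ∈ U :=
    hcomp.continuousAt.eventually (by simpa [hφ₀] using hU)
  filter_upwards [huniq, hUt, hτ.continuousAt.eventually hright] with t h1 h2 h3
  exact (h1 _ h2 h3).symm

/-- Behaviour of the envelope branch traced by the positive root `η t` of `1 + t * g' = 0`. -/
theorem AssumptionA.envelope_branch {k : ℕ} {g : ℝ → ℝ} (hA : AssumptionA k g) {ε₀ δ₀ : ℝ}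
    (hε₀ : 0 < ε₀) (hδ₀ : 0 < δ₀) {η x : ℝ → ℝ}
    (hpos : ∀ t ∈ Ioo (1 : ℝ) (1 + ε₀), 0 < η t)
    (hroot : ∀ t ∈ Ioo (1 : ℝ) (1 + ε₀), ∀ z : ℝ, 0 < z → z < δ₀ →
      (1 + t * deriv g z = 0 ↔ z = η t))
    (hlim : Tendsto η (𝓝[>] (1 : ℝ)) (𝓝 0)) (hη1 : η 1 = 0)
    (hx : ∀ t, x t = η t + t * g (η t)) :
    ∃ ε : ℝ, 0 < ε ∧ ε ≤ ε₀ ∧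
      ContDiffOn ℝ (2 * k + 1 : ℕ) x (Ioo 1 (1 + ε)) ∧
      (∀ t ∈ Ico (1 : ℝ) (1 + ε), HasDerivWithinAt x (g (η t)) (Ici 1) t) ∧
      (∀ t ∈ Ioo (1 : ℝ) (1 + ε), x t < 0) ∧
      (∃ C : ℝ, 0 ≤ C ∧ ∀ t₁ ∈ Ico (1 : ℝ) (1 + ε), ∀ t₂ ∈ Ico (1 : ℝ) (1 + ε),
        |g (η t₁) - g (η t₂)| ≤ C * |t₁ - t₂| ^ ((1 : ℝ) / (2 * (k : ℝ)))) ∧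
      (fun t => x t + 2 * (k : ℝ) * (2 * (k : ℝ) + 1) ^ (-(2 * (k : ℝ) + 1) / (2 * (k : ℝ)))
            * (t - 1) ^ ((2 * (k : ℝ) + 1) / (2 * (k : ℝ)))
          - iteratedDeriv (2 * k + 2) g 0 / (Nat.factorial (2 * k + 2) : ℝ)
            * (2 * (k : ℝ) + 1) ^ (-((k : ℝ) + 1) / (k : ℝ)) * (t - 1) ^ (((k : ℝ) + 1) / (k : ℝ)))
        =o[𝓝[>] (1 : ℝ)] (fun t => (t - 1) ^ (((k : ℝ) + 1) / (k : ℝ))) := by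
  have hk := hA.1
  have hd0 := hA.2.2.2.1
  have hg0 := hA.apply_zero
  have hgdiff : Differentiable ℝ g := hA.2.1.differentiable (by simp)
  obtain ⟨δ₁, hδ₁, hdd, hpow⟩ := hA.exists_pow_sub_le
  obtain ⟨δ₂, hδ₂, hneg⟩ : ∃ δ₂ > 0, ∀ y ∈ Ioo 0 δ₂, g y < 0 := by
    have h1 : ∀ᶠ y in 𝓝 (0 : ℝ), deriv g y < 0 :=
      hA.contDiff_deriv.continuous.continuousAt.eventually (gt_mem_nhds (by simp [hd0]))
    obtain ⟨δ, hδ, h⟩ := Metric.eventually_nhds_iff_ball.1 h1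
    refine ⟨δ, hδ, fun y hy => ?_⟩
    have hanti : StrictAntiOn g (Ico 0 δ) :=
      strictAntiOn_of_deriv_neg (convex_Ico _ _) hgdiff.continuous.continuousOn fun z hz => by
        rw [interior_Ico] at hz
        exact h z (by simpa [abs_of_pos hz.1] using hz.2)
    simpa [hg0] using hanti ⟨le_rfl, hδ⟩ ⟨hy.1.le, hy.2⟩ hy.1
  obtain ⟨δ, hδ, hle₀, hle₁, hle₂⟩ : ∃ δ > 0, δ ≤ δ₀ ∧ δ ≤ δ₁ ∧ δ ≤ δ₂ :=
    ⟨min δ₀ (min δ₁ δ₂), by positivity, by simp, by simp, by simp⟩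
  obtain ⟨ε, hε, hεle, hsmall⟩ : ∃ ε > 0, ε ≤ ε₀ ∧ ∀ t ∈ Ioo (1 : ℝ) (1 + ε), η t < δ := by
    obtain ⟨b, hb, hsub⟩ := mem_nhdsGT_iff_exists_Ioo_subset.1 (hlim.eventually (gt_mem_nhds hδ))
    have hb : 1 < b := hb
    refine ⟨min ε₀ (b - 1), lt_min hε₀ (by linarith), by simp, fun t ht => hsub ⟨ht.1, ?_⟩⟩
    have := min_le_right ε₀ (b - 1)
    linarith [ht.2]
  have hmem : ∀ t ∈ Ioo (1 : ℝ) (1 + ε), t ∈ Ioo (1 : ℝ) (1 + ε₀) :=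
    fun t ht => ⟨ht.1, by linarith [ht.2]⟩
  have hIco : ∀ t ∈ Ico (1 : ℝ) (1 + ε), t = 1 ∨ t ∈ Ioo (1 : ℝ) (1 + ε) := fun t ht =>
    ht.1.eq_or_lt.imp Eq.symm fun h => ⟨h, ht.2⟩
  have hIoo : Ioo (1 : ℝ) (1 + ε) ∈ 𝓝[>] (1 : ℝ) := Ioo_mem_nhdsGT (by linarith)
  have hmul : ∀ t ∈ Ioo (1 : ℝ) (1 + ε), 1 + t * deriv g (η t) = 0 := fun t ht =>
    (hroot t (hmem t ht) _ (hpos t (hmem t ht)) ((hsmall t ht).trans_le hle₀)).2 rfl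
  have hderiv : ∀ t ∈ Ico (1 : ℝ) (1 + ε), deriv g (η t) = -t⁻¹ := by
    intro t ht
    rcases hIco t ht with rfl | ht'
    · simp [hη1, hd0]
    · have : t ≠ 0 := by linarith [ht.1]
      have := hmul t ht'
      field_simp
      linarith
  have hrange : ∀ t ∈ Ico (1 : ℝ) (1 + ε), 0 ≤ η t ∧ η t < δ := by
    intro t ht
    rcases hIco t ht with rfl | ht'
    · simp [hη1, hδ]
    · exact ⟨(hpos t (hmem t ht')).le, hsmall t ht'⟩
  have hηC : ∀ t ∈ Ioo (1 : ℝ) (1 + ε), ContDiffAt ℝ (2 * k + 1 : ℕ) η t := by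
    intro t ht
    have hηt := hpos t (hmem t ht)
    refine contDiffAt_of_comp_eventuallyEq (F := deriv g) (τ := fun t => -t⁻¹) (U := Ioo 0 δ)
      (by simp) hA.contDiff_deriv.contDiffAt (hdd _ ⟨hηt, (hsmall t ht).trans_le hle₁⟩).ne'
      (contDiffAt_id.inv (by simpa using (show t ≠ 0 by linarith [ht.1]))).neg
      (hderiv t (Ioo_subset_Ico_self ht)) (Ioo_mem_nhds hηt (hsmall t ht)) ?_
    filter_upwards [Ioo_mem_nhds ht.1 ht.2] with s hs z hz hzs
    refine (hroot s (hmem s hs) z hz.1 (hz.2.trans_le hle₀)).1 ?_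
    have : s ≠ 0 := by linarith [hs.1]
    rw [hzs]
    field_simp
    ring
  have hxfun : x = fun t => η t + t * g (η t) := funext hx
  have hxC : ∀ t ∈ Ioo (1 : ℝ) (1 + ε), ContDiffAt ℝ (2 * k + 1 : ℕ) x t := by
    intro t ht
    rw [hxfun]
    have hgC : ContDiff ℝ (2 * k + 1 : ℕ) g :=
      hA.2.1.of_le (by exact_mod_cast (by omega : 2 * k + 1 ≤ 2 * k + 2))
    exact (hηC t ht).add (contDiffAt_id.mul (hgC.contDiffAt.comp t (hηC t ht)))
  have hxd : ∀ t ∈ Ioo (1 : ℝ) (1 + ε), HasDerivAt x (g (η t)) t := by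
    intro t ht
    rw [hxfun]
    have hη' := ((hηC t ht).differentiableAt (by simp)).hasDerivAt
    refine (hη'.add ((hasDerivAt_id t).mul
      ((hgdiff (η t)).hasDerivAt.comp t hη'))).congr_deriv ?_
    simp only [id, Function.comp]
    linear_combination deriv η t * hmul t ht
  have hx1 : x 1 = 0 := by simp [hx, hη1, hg0]
  have hglim : Tendsto (fun t => g (η t)) (𝓝[>] 1) (𝓝 0) := by
    have := hgdiff.continuous.tendsto 0
    rw [hg0] at this
    exact this.comp hlim
  have hxlim : Tendsto x (𝓝[>] 1) (𝓝 0) := by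
    rw [hxfun]
    have hid : Tendsto (fun t : ℝ => t) (𝓝[>] 1) (𝓝 1) := nhdsWithin_le_nhds
    simpa using hlim.add (hid.mul hglim)
  have hxdw : ∀ t ∈ Ico (1 : ℝ) (1 + ε), HasDerivWithinAt x (g (η t)) (Ici 1) t := by
    intro t ht
    rcases hIco t ht with rfl | ht'
    · rw [hη1, hg0]
      refine hasDerivWithinAt_Ici_of_tendsto_deriv (s := Ioo 1 (1 + ε))
        (fun s hs => (hxd s hs).differentiableAt.differentiableWithinAt) ?_ hIoo ?_
      · rw [ContinuousWithinAt, hx1]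
        exact hxlim.mono_left (nhdsWithin_mono _ Ioo_subset_Ioi_self)
      · refine hglim.congr' ?_
        filter_upwards [hIoo] with s hs
        exact (hxd s hs).deriv.symm
    · exact (hxd t ht').hasDerivWithinAt
  refine ⟨ε, hε, hεle, fun t ht => (hxC t ht).contDiffWithinAt, hxdw, ?_, ?_, ?_⟩
  · have hanti : StrictAntiOn x (Ico 1 (1 + ε)) := by
      refine strictAntiOn_of_deriv_neg (convex_Ico _ _)
        (fun t ht => (hxdw t ht).continuousWithinAt.mono Ico_subset_Ici_self) fun t ht => ?_
      rw [interior_Ico] at ht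
      rw [(hxd t ht).deriv]
      exact hneg _ ⟨hpos t (hmem t ht), (hsmall t ht).trans_le hle₂⟩
    intro t ht
    simpa [hx1] using hanti ⟨le_rfl, by linarith⟩ ⟨ht.1.le, ht.2⟩ ht.1
  · obtain ⟨C, hC⟩ := isCompact_Icc.exists_bound_of_continuousOn (s := Icc 0 δ)
      hA.contDiff_deriv.continuous.continuousOn
    have hC0 : 0 ≤ C := (norm_nonneg _).trans (hC 0 ⟨le_rfl, hδ.le⟩)
    refine ⟨C, hC0, fun t₁ ht₁ t₂ ht₂ => ?_⟩
    have hr₁ := hrange t₁ ht₁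
    have hr₂ := hrange t₂ ht₂
    have hlip : |g (η t₁) - g (η t₂)| ≤ C * |η t₁ - η t₂| :=
      Convex.norm_image_sub_le_of_norm_deriv_le (fun z _ => hgdiff z) hC (convex_Icc 0 δ)
        ⟨hr₂.1, hr₂.2.le⟩ ⟨hr₁.1, hr₁.2.le⟩
    refine hlip.trans (mul_le_mul_of_nonneg_left ?_ hC0)
    have hle : |η t₁ - η t₂| ^ (2 * k) ≤ |deriv g (η t₁) - deriv g (η t₂)| := by
      rcases le_total (η t₁) (η t₂) with h | h
      · rw [abs_sub_comm, abs_of_nonneg (sub_nonneg.2 h), abs_sub_comm]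
        exact (hpow _ _ hr₁.1 h (hr₂.2.trans_le hle₁)).trans (le_abs_self _)
      · rw [abs_of_nonneg (sub_nonneg.2 h)]
        exact (hpow _ _ hr₂.1 h (hr₁.2.trans_le hle₁)).trans (le_abs_self _)
    have htle : |deriv g (η t₁) - deriv g (η t₂)| ≤ |t₁ - t₂| := by
      have h1 : 1 ≤ t₁ := ht₁.1
      have h2 : 1 ≤ t₂ := ht₂.1
      have hpos12 : 0 < t₁ * t₂ := by positivity
      rw [hderiv t₁ ht₁, hderiv t₂ ht₂,
        show -t₁⁻¹ - -t₂⁻¹ = (t₁ - t₂) / (t₁ * t₂) by field_simp; ring, abs_div,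
        abs_of_pos hpos12]
      exact div_le_self (abs_nonneg _) (one_le_mul_of_one_le_of_one_le h1 h2)
    calc |η t₁ - η t₂| = (|η t₁ - η t₂| ^ (2 * k)) ^ (((2 * k : ℕ) : ℝ)⁻¹) :=
          (Real.pow_rpow_inv_natCast (abs_nonneg _) (by omega)).symm
      _ ≤ |t₁ - t₂| ^ (((2 * k : ℕ) : ℝ)⁻¹) :=
          Real.rpow_le_rpow (by positivity) (hle.trans htle) (by positivity)
      _ = |t₁ - t₂| ^ ((1 : ℝ) / (2 * (k : ℝ))) := by
          push_cast
          rw [one_div]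
  · have hlim' : Tendsto η (𝓝[>] 1) (𝓝[>] 0) := tendsto_nhdsWithin_iff.2 ⟨hlim, by
      filter_upwards [hIoo] with t ht using hpos t (hmem t ht)⟩
    have hT : ∀ᶠ t in 𝓝[>] (1 : ℝ), -(deriv g (η t))⁻¹ = t := by
      filter_upwards [hIoo] with t ht
      rw [hderiv t (Ioo_subset_Ico_self ht)]
      simp
    refine (hA.isLittleO_envelope.comp_tendsto hlim').congr' ?_ ?_
    · filter_upwards [hT] with t ht
      simp only [Function.comp, ht, hx]
    · filter_upwards [hT] with t ht
      simp only [Function.comp, ht]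

/-- Two distinct zeros of `1 + t * g'` close to `0` lie on opposite sides of `0`. -/
theorem AssumptionA.exists_root_signs {k : ℕ} {g : ℝ → ℝ} (hA : AssumptionA k g) :
    ∃ δ > 0, ∀ t > 1, ∀ y₁ y₂, |y₁| < δ → |y₂| < δ → y₁ < y₂ → 1 + t * deriv g y₁ = 0 →
      1 + t * deriv g y₂ = 0 → y₁ < 0 ∧ 0 < y₂ := by
  obtain ⟨δ₁, hδ₁, -, h₁⟩ := hA.exists_pow_sub_le
  obtain ⟨δ₂, hδ₂, -, h₂⟩ := hA.neg.exists_pow_sub_le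
  refine ⟨min δ₁ δ₂, lt_min hδ₁ hδ₂, fun t ht y₁ y₂ hy₁ hy₂ hlt hr₁ hr₂ => ?_⟩
  have heq : deriv g y₁ = deriv g y₂ :=
    mul_left_cancel₀ (show t ≠ 0 by linarith) (by linarith)
  have hne : ∀ y, 1 + t * deriv g y = 0 → y ≠ 0 := by
    rintro y hy rfl
    rw [hA.2.2.2.1] at hy
    linarith
  have hpow : 0 < (y₂ - y₁) ^ (2 * k) := pow_pos (sub_pos.2 hlt) _
  constructor
  · by_contra! h
    have := h₁ y₁ y₂ h hlt.le ((abs_lt.1 hy₂).2.trans_le (min_le_left _ _))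
    linarith
  · by_contra! h
    have := h₂ (-y₂) (-y₁) (by linarith) (by linarith)
      ((neg_lt.1 (abs_lt.1 hy₁).1).trans_le (min_le_right _ _))
    rw [deriv_neg_comp_neg, deriv_neg_comp_neg, neg_neg, neg_neg,
      show -y₁ - -y₂ = y₂ - y₁ by ring] at this
    linarith

/-- Under assumption (A_k), the curves `x_±(t) = η_±(t) + t g(η_±(t))` are
`C^{2k+1}` in `(1,1+ε)` and `C^{(2k+1)/(2k)}` up to `t = 1` (derivative Hölder of exponent
`1/(2k)`), they are envelopes of the characteristics: `x_±'(t) = g(η_±(t))`, they form a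
cusp at `(1,0)` (both start at `(1,0)` with common tangent speed `g(0)` and `x₊ < x₋`),
and they admit the stated expansions. -/
theorem statement5 (k : ℕ) (g : ℝ → ℝ) (hA : AssumptionA k g)
    (ε₀ δ₀ : ℝ) (hε₀ : 0 < ε₀) (hδ₀ : 0 < δ₀)
    (ηm ηp : ℝ → ℝ)
    (hlt : ∀ t ∈ Ioo (1 : ℝ) (1 + ε₀), ηm t < ηp t)
    (hroots : ∀ t ∈ Ioo (1 : ℝ) (1 + ε₀), ∀ z : ℝ, |z| < δ₀ →
      (1 + t * deriv g z = 0 ↔ z = ηm t ∨ z = ηp t))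
    (hsm : Tendsto ηm (𝓝[>] (1 : ℝ)) (𝓝 0))
    (hsp : Tendsto ηp (𝓝[>] (1 : ℝ)) (𝓝 0))
    (hm1 : ηm 1 = 0) (hp1 : ηp 1 = 0)
    (xm xp : ℝ → ℝ)
    (hxm : ∀ t, xm t = ηm t + t * g (ηm t))
    (hxp : ∀ t, xp t = ηp t + t * g (ηp t)) :
    ∃ ε : ℝ, 0 < ε ∧ ε ≤ ε₀ ∧
      -- interior regularity
      ContDiffOn ℝ (2 * k + 1 : ℕ) xp (Ioo 1 (1 + ε)) ∧
      ContDiffOn ℝ (2 * k + 1 : ℕ) xm (Ioo 1 (1 + ε)) ∧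
      -- envelope property: the tangent of x = x_±(t) is the characteristic speed,
      -- including one-sidedly at t = 1 (in particular x_±(1) = 0, x_±'(1) = g 0)
      (∀ t ∈ Ico (1 : ℝ) (1 + ε), HasDerivWithinAt xp (g (ηp t)) (Ici 1) t ∧
        HasDerivWithinAt xm (g (ηm t)) (Ici 1) t) ∧
      xp 1 = 0 ∧ xm 1 = 0 ∧
      -- cusp at (1,0)
      (∀ t ∈ Ioo (1 : ℝ) (1 + ε), xp t < xm t) ∧
      -- C^{(2k+1)/(2k)} up to t = 1: the first derivative g(η_±(t)) is Hölder of exponent 1/(2k)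
      (∃ C : ℝ, ∀ t₁ ∈ Ico (1 : ℝ) (1 + ε), ∀ t₂ ∈ Ico (1 : ℝ) (1 + ε),
        |g (ηp t₁) - g (ηp t₂)| ≤ C * |t₁ - t₂| ^ ((1 : ℝ) / (2 * (k : ℝ))) ∧
        |g (ηm t₁) - g (ηm t₂)| ≤ C * |t₁ - t₂| ^ ((1 : ℝ) / (2 * (k : ℝ)))) ∧
      -- expansions
      ((fun t => xp t + 2 * (k : ℝ) * (2 * (k : ℝ) + 1) ^ (-(2 * (k : ℝ) + 1) / (2 * (k : ℝ)))
            * (t - 1) ^ ((2 * (k : ℝ) + 1) / (2 * (k : ℝ)))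
          - iteratedDeriv (2 * k + 2) g 0 / (Nat.factorial (2 * k + 2) : ℝ)
            * (2 * (k : ℝ) + 1) ^ (-((k : ℝ) + 1) / (k : ℝ)) * (t - 1) ^ (((k : ℝ) + 1) / (k : ℝ)))
        =o[𝓝[>] (1 : ℝ)] (fun t => (t - 1) ^ (((k : ℝ) + 1) / (k : ℝ)))) ∧
      ((fun t => xm t - 2 * (k : ℝ) * (2 * (k : ℝ) + 1) ^ (-(2 * (k : ℝ) + 1) / (2 * (k : ℝ)))
            * (t - 1) ^ ((2 * (k : ℝ) + 1) / (2 * (k : ℝ)))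
          - iteratedDeriv (2 * k + 2) g 0 / (Nat.factorial (2 * k + 2) : ℝ)
            * (2 * (k : ℝ) + 1) ^ (-((k : ℝ) + 1) / (k : ℝ)) * (t - 1) ^ (((k : ℝ) + 1) / (k : ℝ)))
        =o[𝓝[>] (1 : ℝ)] (fun t => (t - 1) ^ (((k : ℝ) + 1) / (k : ℝ)))) := by
  obtain ⟨δ, hδ, hsign⟩ := hA.exists_root_signs
  obtain ⟨ε₁, hε₁, hε₁le, hnear⟩ : ∃ ε > 0, ε ≤ ε₀ ∧ ∀ t ∈ Ioo (1 : ℝ) (1 + ε),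
      |ηm t| < min δ δ₀ ∧ |ηp t| < min δ δ₀ := by
    have hmin : 0 < min δ δ₀ := lt_min hδ hδ₀
    have hm : ∀ᶠ t in 𝓝[>] (1 : ℝ), |ηm t| < min δ δ₀ :=
      hsm.abs.eventually (gt_mem_nhds (by simpa using hmin))
    have hp : ∀ᶠ t in 𝓝[>] (1 : ℝ), |ηp t| < min δ δ₀ :=
      hsp.abs.eventually (gt_mem_nhds (by simpa using hmin))
    obtain ⟨b, hb, hsub⟩ := mem_nhdsGT_iff_exists_Ioo_subset.1 (hm.and hp)
    have hb : 1 < b := hb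
    refine ⟨min ε₀ (b - 1), lt_min hε₀ (by linarith), by simp, fun t ht => hsub ⟨ht.1, ?_⟩⟩
    have := min_le_right ε₀ (b - 1)
    linarith [ht.2]
  have hmem : ∀ t ∈ Ioo (1 : ℝ) (1 + ε₁), t ∈ Ioo (1 : ℝ) (1 + ε₀) :=
    fun t ht => ⟨ht.1, by linarith [ht.2]⟩
  have hsigns : ∀ t ∈ Ioo (1 : ℝ) (1 + ε₁), ηm t < 0 ∧ 0 < ηp t := by
    intro t ht
    obtain ⟨hm, hp⟩ := hnear t ht
    rw [lt_min_iff] at hm hp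
    have hr := hroots t (hmem t ht)
    exact hsign t ht.1 _ _ hm.1 hp.1 (hlt t (hmem t ht)) ((hr _ hm.2).2 (Or.inl rfl))
      ((hr _ hp.2).2 (Or.inr rfl))
  obtain ⟨εp, hεp, hεple, hCp, hDp, hnp, ⟨Kp, hKp, hHp⟩, hEp⟩ :=
    hA.envelope_branch hε₁ hδ₀ (fun t ht => (hsigns t ht).2)
      (fun t ht z hz hzδ => by
        rw [hroots t (hmem t ht) z (by rwa [abs_of_pos hz])]
        have := (hsigns t ht).1
        exact or_iff_right (by linarith)) hsp hp1 hxp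
  obtain ⟨εm, hεm, hεmle, hCm, hDm, hnm, ⟨Km, hKm, hHm⟩, hEm⟩ :=
    hA.neg.envelope_branch (η := fun t => -ηm t) (x := fun t => -xm t) hε₁ hδ₀
      (fun t ht => neg_pos.2 (hsigns t ht).1)
      (fun t ht z hz hzδ => by
        rw [deriv_neg_comp_neg, hroots t (hmem t ht) (-z) (by rwa [abs_neg, abs_of_pos hz]),
          neg_eq_iff_eq_neg, or_iff_left]
        have := (hsigns t ht).2
        linarith) (by simpa using hsm.neg) (by simp [hm1])
      (fun t => by simp only [hxm, neg_neg]; ring)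
  simp only [neg_neg] at hDm hHm
  have hsubp : min εp εm ≤ εp := min_le_left _ _
  have hsubm : min εp εm ≤ εm := min_le_right _ _
  have hg0 := hA.apply_zero
  refine ⟨min εp εm, lt_min hεp hεm, (hsubp.trans hεple).trans hε₁le,
    hCp.mono (Ioo_subset_Ioo_right (by linarith)), ?_, fun t ht => ⟨hDp t ⟨ht.1, ?_⟩, ?_⟩,
    by simp [hxp, hp1, hg0], by simp [hxm, hm1, hg0], fun t ht => ?_,
    ⟨max Kp Km, fun t₁ ht₁ t₂ ht₂ => ⟨?_, ?_⟩⟩, hEp, ?_⟩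
  · have h := hCm.neg.mono (Ioo_subset_Ioo_right (by linarith : 1 + min εp εm ≤ 1 + εm))
    simpa only [neg_neg] using h
  · linarith [ht.2]
  · have h := (hDm t ⟨ht.1, by linarith [ht.2]⟩).fun_neg
    simpa only [neg_neg] using h
  · have h1 := hnp t ⟨ht.1, by linarith [ht.2]⟩
    have h2 := hnm t ⟨ht.1, by linarith [ht.2]⟩
    linarith
  · refine (hHp t₁ ⟨ht₁.1, by linarith [ht₁.2]⟩ t₂ ⟨ht₂.1, by linarith [ht₂.2]⟩).trans ?_
    gcongr
    exact le_max_left _ _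
  · have h := hHm t₁ ⟨ht₁.1, by linarith [ht₁.2]⟩ t₂ ⟨ht₂.1, by linarith [ht₂.2]⟩
    rw [← abs_neg]
    refine (le_of_eq (congrArg abs (by ring))).trans (h.trans ?_)
    gcongr
    exact le_max_right _ _
  · have hder : iteratedDeriv (2 * k + 2) (fun x => -g (-x)) 0 = -iteratedDeriv (2 * k + 2) g 0 := by
      rw [iteratedDeriv_fun_neg, iteratedDeriv_comp_neg,
        Even.neg_one_pow ⟨k + 1, by ring⟩, one_smul, neg_zero]
    rw [hder] at hEm
    refine hEm.neg_left.congr_left fun t => ?_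
    ring
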